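/- arXiv:1009.5051 — 2 statements merged into one kernel-verified Lean document; each statement's English description precedes it below -/
import Mathlib

section
/- Every finitely generated nilpotent group that is not virtually cyclic has exponential geodesic growth with respect to every finite symmetric generating set. -/
/-- A word `w` over the alphabet `X ⊆ G` is geodesic if its letters lie in `X` and no
shorter word over `X` represents the same element of `G`. -/
def IsGeodesicWord {G : Type*} [Group G] (X : Set G) (w : List G) : Prop :=
  (∀ a ∈ w, a ∈ X) ∧
    ∀ w' : List G, (∀ a ∈ w', a ∈ X) → w'.prod = w.prod → w.length ≤ w'.length

/-- The geodesic growth function: the number of geodesic words over `X` of length at most `n`. -/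
noncomputable def geodesicGrowth {G : Type*} [Group G] (X : Set G) (n : ℕ) : ℕ :=
  Set.ncard {w : List G | IsGeodesicWord X w ∧ w.length ≤ n}

/-- The word growth function: the number of elements of `G` represented by some word over `X`
of length at most `n`. -/
noncomputable def wordGrowth {G : Type*} [Group G] (X : Set G) (n : ℕ) : ℕ :=
  Set.ncard {g : G | ∃ w : List G, (∀ a ∈ w, a ∈ X) ∧ w.prod = g ∧ w.length ≤ n}

lemma finiteIndex_of_sup_finite {G : Type*} [Group G] (H N : Subgroup G) [N.Normal] [Finite N]
    (h : (H ⊔ N).FiniteIndex) : H.FiniteIndex := by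
  have hle : H ≤ H ⊔ N := le_sup_left
  have h1 := Subgroup.relIndex_mul_index hle
  have : Finite ((H ⊔ N : Subgroup G) ⧸ H.subgroupOf (H ⊔ N)) := by
    refine Finite.of_surjective
      (fun n : N => (QuotientGroup.mk (⟨n.1, (le_sup_right : N ≤ H ⊔ N) n.2⟩ : (H ⊔ N : Subgroup G)) :
        (H ⊔ N : Subgroup G) ⧸ H.subgroupOf (H ⊔ N))) ?_
    intro q
    induction q using QuotientGroup.induction_on with
    | H z =>
      obtain ⟨z, hz⟩ := z
      have hz' := hz
      rw [sup_comm, ← SetLike.mem_coe, Subgroup.normal_mul] at hz'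
      obtain ⟨n, hn, k, hk, rfl⟩ := Set.mem_mul.1 hz'
      refine ⟨⟨n, hn⟩, ?_⟩
      rw [QuotientGroup.eq, Subgroup.mem_subgroupOf]
      simpa using hk
  constructor
  rw [← h1]
  refine mul_ne_zero ?_ h.index_ne_zero
  exact Subgroup.FiniteIndex.index_ne_zero (H := H.subgroupOf (H ⊔ N))
    (self := Subgroup.finiteIndex_of_finite_quotient)

lemma finite_commutatorSet_of_center {G : Type*} [Group G]
    [Finite (G ⧸ Subgroup.center G)] : Finite (commutatorSet G) := by
  have : (Set.range fun p : (G ⧸ Subgroup.center G) × (G ⧸ Subgroup.center G) =>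
      p.1.out * p.2.out * p.1.out⁻¹ * p.2.out⁻¹).Finite := Set.finite_range _
  refine (this.subset ?_).to_subtype
  rintro _ ⟨a, b, rfl⟩
  refine ⟨(a, b), ?_⟩
  obtain ⟨⟨z, hz⟩, h1⟩ := QuotientGroup.mk_out_eq_mul (Subgroup.center G) a
  obtain ⟨⟨w, hw⟩, h2⟩ := QuotientGroup.mk_out_eq_mul (Subgroup.center G) b
  simp only at h1 h2
  simp only [h1, h2, commutatorElement_def, mul_inv_rev]
  have hz' := Subgroup.mem_center_iff.1 hz
  have hw' := Subgroup.mem_center_iff.1 hw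
  calc a * z * (b * w) * (z⁻¹ * a⁻¹) * (w⁻¹ * b⁻¹)
      = a * (z * (b * w)) * z⁻¹ * a⁻¹ * w⁻¹ * b⁻¹ := by group
    _ = a * b * (w * a⁻¹) * w⁻¹ * b⁻¹ := by rw [← hz']; group
    _ = a * b * a⁻¹ * b⁻¹ := by rw [← hw']; group

lemma finite_commutator_of_nilpotent (G : Type*) [Group G] [Group.IsNilpotent G] :
    Group.FG G → (∃ t : G, (Subgroup.zpowers t ⊔ commutator G).FiniteIndex) →
      Finite (commutator G) := by
  refine Group.nilpotent_center_quotient_ind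
    (P := fun G [Group G] [Group.IsNilpotent G] => Group.FG G →
      (∃ t : G, (Subgroup.zpowers t ⊔ commutator G).FiniteIndex) → Finite (commutator G)) G ?_ ?_
  · intro G _ _ _ _
    infer_instance
  · intro G _ _ ih hfg ⟨t, ht⟩
    set π := QuotientGroup.mk' (Subgroup.center G) with hπ
    have hsurj : Function.Surjective π := QuotientGroup.mk'_surjective _
    have hmap : (Subgroup.zpowers t ⊔ commutator G).map π =
        Subgroup.zpowers (π t) ⊔ commutator (G ⧸ Subgroup.center G) := by
      rw [Subgroup.map_sup, MonoidHom.map_zpowers, commutator_def, Subgroup.map_commutator,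
        Subgroup.map_top_of_surjective π hsurj]
      rfl
    have hfi : (Subgroup.zpowers (π t) ⊔ commutator (G ⧸ Subgroup.center G)).FiniteIndex := by
      rw [← hmap]
      exact ⟨ne_zero_of_dvd_ne_zero ht.index_ne_zero (Subgroup.index_map_dvd _ hsurj)⟩
    have hfgQ : Group.FG (G ⧸ Subgroup.center G) := inferInstance
    have hfin : Finite (commutator (G ⧸ Subgroup.center G)) := ih hfgQ ⟨π t, hfi⟩
    have hz : (Subgroup.zpowers (π t)).FiniteIndex := finiteIndex_of_sup_finite _ _ hfi
    have hcs : Finite (commutatorSet (G ⧸ Subgroup.center G)) := by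
      have h1 : ((commutator (G ⧸ Subgroup.center G) : Set (G ⧸ Subgroup.center G))).Finite :=
        Set.toFinite _
      refine (h1.subset ?_).to_subtype
      rw [commutator_eq_closure]
      exact Subgroup.subset_closure
    have hc : (Subgroup.center (G ⧸ Subgroup.center G)).FiniteIndex := inferInstance
    set m := (Subgroup.center (G ⧸ Subgroup.center G)).index with hm
    have hm0 : m ≠ 0 := hc.index_ne_zero
    have hs : π (t ^ m) ∈ Subgroup.center (G ⧸ Subgroup.center G) := by
      rw [map_pow]; exact Subgroup.pow_index_mem _ _
    set s := t ^ m with hsdef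
    set e := (Subgroup.zpowers (π t)).normalCore.index with he
    have he0 : e ≠ 0 := Subgroup.FiniteIndex.index_ne_zero
    have hpow : ∀ h : G, Commute s (h ^ e) := by
      intro h
      have h1 : π h ^ e ∈ Subgroup.zpowers (π t) :=
        Subgroup.normalCore_le _ (Subgroup.pow_index_mem _ _)
      obtain ⟨k, hk⟩ := h1
      simp only [← map_zpow, ← map_pow] at hk
      have h2 : (t ^ k)⁻¹ * h ^ e ∈ Subgroup.center G := QuotientGroup.eq.1 hk
      have h3 : h ^ e = t ^ k * ((t ^ k)⁻¹ * h ^ e) := by group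
      rw [h3]
      refine Commute.mul_right ?_ ?_
      · exact ((Commute.refl t).pow_left m).zpow_right k
      · exact Subgroup.mem_center_iff.1 h2 s
    have hse : s ^ e ∈ Subgroup.center G := by
      rw [Subgroup.mem_center_iff]
      intro h
      have hzc : s * h * s⁻¹ * h⁻¹ ∈ Subgroup.center G := by
        rw [← QuotientGroup.ker_mk' (Subgroup.center G), MonoidHom.mem_ker]
        have := Subgroup.mem_center_iff.1 hs (π h)
        simp only [← hπ, map_mul, map_inv]
        rw [← this]; group
      set z := s * h * s⁻¹ * h⁻¹ with hzd
      have hz' : ∀ g, Commute z g := fun g => (Subgroup.mem_center_iff.1 hzc g).symm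
      have hconj : s * h * s⁻¹ = z * h := by rw [hzd]; group
      have h4 : s * h ^ e * s⁻¹ = z ^ e * h ^ e := by
        rw [← conj_pow, hconj, (hz' h).mul_pow]
      have h5 : z ^ e = 1 := by
        rw [(hpow h).eq, mul_inv_cancel_right] at h4
        exact (mul_eq_right.1 h4.symm)
      have h6 : ∀ j : ℕ, s ^ j * h = z ^ j * h * s ^ j := by
        intro j
        induction j with
        | zero => simp
        | succ j ihj =>
          have hsh : s * h = z * h * s := by rw [← hconj]; group
          calc s ^ (j+1) * h = s * (s ^ j * h) := by rw [pow_succ']; group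
            _ = s * z ^ j * h * s ^ j := by rw [ihj]; group
            _ = z ^ j * (s * h) * s ^ j := by
              rw [((hz' s).symm.pow_right j).eq]; group
            _ = z ^ (j+1) * h * s ^ (j+1) := by rw [hsh, pow_succ z, pow_succ' s]; group
      rw [h6 e, h5, one_mul]
    have hfo : IsOfFinOrder (π t) := by
      rw [isOfFinOrder_iff_pow_eq_one]
      refine ⟨m * e, Nat.pos_of_ne_zero (mul_ne_zero hm0 he0), ?_⟩
      rw [← map_pow, pow_mul]
      exact (QuotientGroup.eq_one_iff _).2 hse
    have hzf : Finite (Subgroup.zpowers (π t)) := hfo.finite_zpowers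
    have hQ : Finite (G ⧸ Subgroup.center G) :=
      (Subgroup.finite_iff_finite_and_finiteIndex (H := Subgroup.zpowers (π t))).2 ⟨hzf, hz⟩
    have := finite_commutatorSet_of_center (G := G)
    infer_instance

/-- The two independent homomorphisms to the integers. -/
lemma exists_two_homs {G : Type*} [Group G] [Group.FG G]
    (h : ¬ ∃ t : G, (Subgroup.zpowers t ⊔ commutator G).FiniteIndex) :
    ∃ f g : G →* Multiplicative ℤ, ∃ a b : G, (f a).toAdd = 1 ∧ (g a).toAdd = 0 ∧
      (f b).toAdd = 0 ∧ (g b).toAdd = 1 := by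
  have hfg : Group.FG (Abelianization G) := QuotientGroup.fg (commutator G)
  have hfg' : AddGroup.FG (Additive (Abelianization G)) := inferInstance
  obtain ⟨n, ι, _, p, hp, e, ⟨E⟩⟩ :=
    AddCommGroup.equiv_free_prod_directSum_zmod (Additive (Abelianization G))
  have hne : ∀ i, NeZero (p i ^ e i) := fun i => ⟨pow_ne_zero _ (hp i).ne_zero⟩
  classical
  have hT : Finite (DirectSum ι fun i => ZMod (p i ^ e i)) :=
    Finite.of_equiv _ (DirectSum.addEquivProd (fun i => ZMod (p i ^ e i))).symm.toEquiv
  have hsurj : ∀ y, ∃ x : G, E (Additive.ofMul (Abelianization.of x)) = y := by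
    intro y
    obtain ⟨x, hx⟩ := QuotientGroup.mk_surjective (E.symm y).toMul
    refine ⟨x, ?_⟩
    have : Abelianization.of x = (E.symm y).toMul := hx
    rw [this]; simp
  by_cases hn : 2 ≤ n
  · let F : Fin n → (G →* Multiplicative ℤ) := fun i =>
      (AddMonoidHom.toMultiplicative
        (((Finsupp.applyAddHom i).comp (AddMonoidHom.fst _ _)).comp E.toAddMonoidHom)).comp
        Abelianization.of
    have hF : ∀ i x, (F i x).toAdd = (E (Additive.ofMul (Abelianization.of x))).1 i :=
      fun i x => rfl
    obtain ⟨a, ha⟩ := hsurj (Finsupp.single ⟨0, by omega⟩ 1, 0)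
    obtain ⟨b, hb⟩ := hsurj (Finsupp.single ⟨1, by omega⟩ 1, 0)
    refine ⟨F ⟨0, by omega⟩, F ⟨1, by omega⟩, a, b, ?_, ?_, ?_, ?_⟩ <;>
      simp [hF, ha, hb]
  · exfalso
    apply h
    let φ : G →* Multiplicative (DirectSum ι fun i => ZMod (p i ^ e i)) :=
      (AddMonoidHom.toMultiplicative
        ((AddMonoidHom.snd _ _).comp E.toAddMonoidHom)).comp Abelianization.of
    have hφ : ∀ x, (φ x).toAdd = (E (Additive.ofMul (Abelianization.of x))).2 := fun x => rfl
    have : Finite (Multiplicative (DirectSum ι fun i => ZMod (p i ^ e i))) := hT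
    have hk : φ.ker.FiniteIndex := inferInstance
    obtain ⟨t, ht⟩ := hsurj (Finsupp.equivFunOnFinite.symm (fun _ => 1), 0)
    refine ⟨t, Subgroup.finiteIndex_of_le (H := φ.ker) ?_⟩
    intro x hx
    have hx2 : (E (Additive.ofMul (Abelianization.of x))).2 = 0 := by
      rw [← hφ, MonoidHom.mem_ker.1 hx]; rfl
    obtain ⟨k, hk⟩ : ∃ k : ℤ, E (Additive.ofMul (Abelianization.of x)) =
        k • E (Additive.ofMul (Abelianization.of t)) := by
      obtain rfl | rfl : n = 0 ∨ n = 1 := by omega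
      · exact ⟨0, Prod.ext (Subsingleton.elim _ _) (by simp [hx2])⟩
      · refine ⟨(E (Additive.ofMul (Abelianization.of x))).1 0, Prod.ext ?_ (by simp [hx2, ht])⟩
        refine Finsupp.ext fun i => ?_
        rw [Subsingleton.elim i 0]
        simp [ht]
    rw [← map_zsmul] at hk
    have hk2 : Abelianization.of x = Abelianization.of (t ^ k) := by
      have := E.injective hk
      rw [map_zpow]; exact this
    have h3 : (t ^ k)⁻¹ * x ∈ commutator G := by
      rw [← Abelianization.ker_of, MonoidHom.mem_ker, map_mul, map_inv, hk2, inv_mul_cancel]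
    have h4 : x = t ^ k * ((t ^ k)⁻¹ * x) := by group
    rw [h4]
    exact Subgroup.mul_mem_sup ⟨k, rfl⟩ h3

lemma exists_tie {α : Type*} (X : Finset α) (f g : α → ℝ) (x : α) (hx : x ∈ X)
    (hmax : ∀ y ∈ X, f y ≤ f x) (hgt : ∃ y ∈ X, g x < g y) :
    ∃ c : ℝ, ∃ y ∈ X, x ≠ y ∧ f x + c * g x = f y + c * g y ∧
      ∀ z ∈ X, f z + c * g z ≤ f x + c * g x := by
  classical
  obtain ⟨y0, hy0, hy0'⟩ := hgt
  obtain ⟨y, hy, hmin⟩ := Finset.exists_min_image (X.filter fun y => g x < g y)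
    (fun y => (f x - f y) / (g y - g x)) ⟨y0, by simp [hy0, hy0']⟩
  simp only [Finset.mem_filter] at hy hmin
  have hd : 0 < g y - g x := sub_pos.2 hy.2
  refine ⟨(f x - f y) / (g y - g x), y, hy.1, ?_, ?_, ?_⟩
  · rintro rfl; exact lt_irrefl _ hy.2
  · field_simp; ring
  · intro z hz
    have hc : 0 ≤ (f x - f y) / (g y - g x) := div_nonneg (by linarith [hmax y hy.1]) hd.le
    by_cases hzx : g x < g z
    · have h1 := hmin z ⟨hz, hzx⟩
      rw [le_div_iff₀ (by linarith)] at h1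
      linarith
    · have := mul_le_mul_of_nonneg_left (not_lt.1 hzx) hc
      linarith [hmax z hz]

lemma growth_of_tie {G : Type*} [Group G] (X : Finset G) (φ : G → ℝ) (h1 : φ 1 = 0)
    (hmul : ∀ a b, φ (a * b) = φ a + φ b) (x y : G) (hx : x ∈ X) (hy : y ∈ X) (hne : x ≠ y)
    (hxy : φ x = φ y) (hmax : ∀ z ∈ X, φ z ≤ φ x) (hpos : 0 < φ x) :
    ∃ b : ℝ, 1 < b ∧ ∀ n : ℕ, b ^ n ≤ (geodesicGrowth (X : Set G) n : ℝ) := by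
  classical
  have hle : ∀ w : List G, (∀ a ∈ w, a ∈ X) → φ w.prod ≤ w.length * φ x := by
    intro w
    induction w with
    | nil => intro _; simp [h1]
    | cons a w ih =>
      intro hw
      have h2 := ih (fun b hb => hw b (List.mem_cons_of_mem _ hb))
      have h3 := hmax a (hw a List.mem_cons_self)
      rw [List.prod_cons, hmul, List.length_cons]
      push_cast
      linarith
  have heq : ∀ w : List G, (∀ a ∈ w, a = x ∨ a = y) → φ w.prod = w.length * φ x := by
    intro w
    induction w with
    | nil => intro _; simp [h1]
    | cons a w ih =>
      intro hw
      have h2 := ih (fun b hb => hw b (List.mem_cons_of_mem _ hb))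
      have h3 : φ a = φ x := by
        rcases hw a List.mem_cons_self with rfl | rfl
        · rfl
        · exact hxy.symm
      rw [List.prod_cons, hmul, List.length_cons]
      push_cast
      linarith
  refine ⟨2, by norm_num, fun n => ?_⟩
  let F : (Fin n → Bool) → List G := fun v => List.ofFn fun i => if v i then x else y
  have hF : Function.Injective F := by
    intro v w hvw
    have := List.ofFn_injective hvw
    funext i
    have hi := congrFun this i
    cases hv : v i <;> cases hw : w i <;> simp [hv, hw, hne, hne.symm] at hi ⊢
  have hfin : {w : List G | IsGeodesicWord (X : Set G) w ∧ w.length ≤ n}.Finite := by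
    have h2 : {l : List (X : Set G) | l.length ≤ n}.Finite := List.finite_length_le _ n
    refine (h2.image (List.map Subtype.val)).subset ?_
    rintro w ⟨hw, hn⟩
    refine ⟨w.attach.map fun a => ⟨a.1, hw.1 _ a.2⟩, by simpa using hn, ?_⟩
    simp
  have hsub : Set.range F ⊆ {w : List G | IsGeodesicWord (X : Set G) w ∧ w.length ≤ n} := by
    rintro _ ⟨v, rfl⟩
    have hxy' : ∀ a ∈ F v, a = x ∨ a = y := by
      intro a ha
      obtain ⟨i, rfl⟩ := (List.mem_ofFn' _ _).1 ha
      simp only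
      split <;> simp
    refine ⟨⟨?_, ?_⟩, by simp [F]⟩
    · intro a ha
      rcases hxy' a ha with rfl | rfl <;> assumption
    · intro w' hw' hp
      have h2 := hle w' hw'
      rw [hp, heq _ hxy'] at h2
      exact_mod_cast le_of_mul_le_mul_right h2 hpos
  have hcard := Set.ncard_le_ncard hsub hfin
  have hr : (Set.range F).ncard = 2 ^ n := by
    rw [← Set.image_univ, Set.ncard_image_of_injective _ hF, Set.ncard_univ]
    simp
  rw [hr] at hcard
  unfold geodesicGrowth
  exact_mod_cast hcard



theorem nilpotent_not_virtually_cyclic_exponential_geodesic_growth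
    {G : Type*} [Group G] [Group.FG G] [Group.IsNilpotent G]
    (h : ¬ ∃ H : Subgroup G, IsCyclic H ∧ H.FiniteIndex)
    (X : Finset G) (hsym : ∀ g ∈ X, g⁻¹ ∈ X)
    (hgen : Subgroup.closure (X : Set G) = ⊤) :
    ∃ b : ℝ, 1 < b ∧ ∀ n : ℕ, b ^ n ≤ (geodesicGrowth (X : Set G) n : ℝ) := by

  have hno : ¬ ∃ t : G, (Subgroup.zpowers t ⊔ commutator G).FiniteIndex := by
    rintro ⟨t, ht⟩
    have : Finite (commutator G) := finite_commutator_of_nilpotent G inferInstance ⟨t, ht⟩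
    exact h ⟨Subgroup.zpowers t, inferInstance, finiteIndex_of_sup_finite _ _ ht⟩
  obtain ⟨f, g, a, b, hfa, hga, hfb, hgb⟩ := exists_two_homs hno
  -- a homomorphism vanishing on the generators vanishes everywhere
  have hvan : ∀ φ : G → ℝ, (∀ x y, φ (x * y) = φ x + φ y) → (∀ x ∈ X, φ x = 0) → ∀ x, φ x = 0 := by
    intro φ hφ h0 x
    let Φ : G →* Multiplicative ℝ := MonoidHom.mk' (fun x => Multiplicative.ofAdd (φ x))
      (fun x y => by rw [hφ]; rfl)
    have hk : Subgroup.closure (X : Set G) ≤ Φ.ker := by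
      rw [Subgroup.closure_le]
      intro y hy
      exact MonoidHom.mem_ker.2 (congrArg Multiplicative.ofAdd (h0 y hy))
    rw [hgen] at hk
    exact congrArg Multiplicative.toAdd (MonoidHom.mem_ker.1 (hk (Subgroup.mem_top x)))
  have hone : ∀ φ : G → ℝ, (∀ x y, φ (x * y) = φ x + φ y) → φ 1 = 0 := by
    intro φ hφ
    have := hφ 1 1
    rw [mul_one] at this
    linarith
  have hinv : ∀ φ : G → ℝ, (∀ x y, φ (x * y) = φ x + φ y) → ∀ x, φ x⁻¹ = - φ x := by
    intro φ hφ x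
    have := hφ x x⁻¹
    rw [mul_inv_cancel, hone φ hφ] at this
    linarith
  let f' : G → ℝ := fun x => ((f x).toAdd : ℝ)
  let g' : G → ℝ := fun x => ((g x).toAdd : ℝ)
  have hf' : ∀ x y, f' (x * y) = f' x + f' y := fun x y => by simp [f']
  have hg' : ∀ x y, g' (x * y) = g' x + g' y := fun x y => by simp [g']
  have hfa' : f' a = 1 := by simp [f', hfa]
  have hgb' : g' b = 1 := by simp [g', hgb]
  have hga' : g' a = 0 := by simp [g', hga]
  have hXne : X.Nonempty := by
    rw [Finset.nonempty_iff_ne_empty]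
    rintro rfl
    have := hvan f' hf' (by simp) a
    rw [hfa'] at this
    norm_num at this
  obtain ⟨x, hx, hmax⟩ := Finset.exists_max_image X f' hXne
  -- the final step, for a choice of sign of the second homomorphism
  have key : ∀ k : G → ℝ, (∀ x y, k (x * y) = k x + k y) → k a = 0 → (∃ y ∈ X, k x < k y) →
      ∃ b : ℝ, 1 < b ∧ ∀ n : ℕ, b ^ n ≤ (geodesicGrowth (X : Set G) n : ℝ) := by
    intro k hk hka hgt
    obtain ⟨c, y, hy, hne, htie, hall⟩ := exists_tie X f' k x hx hmax hgt
    have hadd : ∀ u v, f' (u * v) + c * k (u * v) = (f' u + c * k u) + (f' v + c * k v) := by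
      intro u v; rw [hf', hk]; ring
    refine growth_of_tie X (fun z => f' z + c * k z)
      (hone (fun z => f' z + c * k z) hadd) hadd x y hx hy hne htie hall ?_
    by_contra hle
    have hz := hvan (fun z => f' z + c * k z) hadd (by
      intro z hz
      have h1 := hall z hz
      have h2 := hall z⁻¹ (hsym z hz)
      have h3 := hinv (fun z => f' z + c * k z) hadd z
      beta_reduce at h3 hle ⊢
      linarith) a
    simp only [hfa', hka] at hz
    norm_num at hz
  by_cases h1 : ∃ y ∈ X, g' x < g' y
  · exact key g' hg' hga' h1
  · refine key (fun z => - g' z) (fun u v => by rw [hg']; ring) (by simp [hga']) ?_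
    by_contra h2
    push Not at h1 h2
    have h0 : ∀ y ∈ X, g' y = 0 := by
      intro y hy
      have e1 := h1 y hy
      have e2 := h2 y hy
      have e3 := h1 _ (hsym y hy)
      have e4 := h2 _ (hsym y hy)
      rw [hinv g' hg'] at e3 e4
      linarith
    have := hvan g' hg' h0 b
    rw [hgb'] at this
    norm_num at this
end

section
/- Let G be a finitely generated group containing an element x whose normal closure A = ⟪x⟫ is abelian and of finite index in G. Then there exists a finite symmetric generating set X for G such that the geodesic growth function Γ_{G,X}(n) is bounded above by a polynomial in n. -/
/-- `g` is represented by a word over `X` of length at most `l`. -/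
def WLe {G : Type*} [Group G] (X : Set G) (g : G) (l : ℕ) : Prop :=
  ∃ w : List G, (∀ a ∈ w, a ∈ X) ∧ w.prod = g ∧ w.length ≤ l

theorem WLe.mul {G : Type*} [Group G] {X : Set G} {g h : G} {l m : ℕ}
    (hg : WLe X g l) (hh : WLe X h m) : WLe X (g * h) (l + m) := by
  obtain ⟨u, hu, rfl, hul⟩ := hg
  obtain ⟨v, hv, rfl, hvl⟩ := hh
  refine ⟨u ++ v, ?_, by simp, by simp; omega⟩
  intro a ha
  rcases List.mem_append.1 ha with h | h
  · exact hu a h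
  · exact hv a h

theorem WLe.mono {G : Type*} [Group G] {X : Set G} {g : G} {l m : ℕ}
    (hg : WLe X g l) (h : l ≤ m) : WLe X g m := by
  obtain ⟨u, hu, h1, hul⟩ := hg
  exact ⟨u, hu, h1, hul.trans h⟩

theorem WLe.zpow {G : Type*} [Group G] {X : Set G} {y : G} (hy : y ∈ X) (hy' : y⁻¹ ∈ X) (e : ℤ) :
    WLe X (y ^ e) e.natAbs := by
  rcases Int.natAbs_eq e with h | h
  · refine ⟨List.replicate e.natAbs y, ?_, ?_, by simp⟩
    · intro a ha
      rw [List.eq_of_mem_replicate ha]; exact hy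
    · rw [List.prod_replicate]
      conv_rhs => rw [h]
      exact (zpow_natCast _ _).symm
  · refine ⟨List.replicate e.natAbs y⁻¹, ?_, ?_, by simp⟩
    · intro a ha
      rw [List.eq_of_mem_replicate ha]; exact hy'
    · rw [List.prod_replicate]
      conv_rhs => rw [h]
      rw [zpow_neg, zpow_natCast, inv_pow]

theorem WLe.exists {G : Type*} [Group G] {X : Set G} (hs : ∀ g ∈ X, g⁻¹ ∈ X)
    (hX : Subgroup.closure X = ⊤) (g : G) : ∃ l, WLe X g l := by
  have hg : g ∈ Subgroup.closure X := by rw [hX]; trivial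
  induction hg using Subgroup.closure_induction with
  | mem a ha => exact ⟨1, [a], by simpa using ha, by simp, by simp⟩
  | one => exact ⟨0, [], by simp, by simp, by simp⟩
  | mul a b _ _ iha ihb =>
    obtain ⟨l, hl⟩ := iha
    obtain ⟨m, hm⟩ := ihb
    exact ⟨l + m, hl.mul hm⟩
  | inv a _ iha =>
    obtain ⟨l, w, hw, hp, hl⟩ := iha
    refine ⟨l, (w.map (·⁻¹)).reverse, ?_, ?_, by simpa using hl⟩
    · intro b hb
      simp only [List.mem_reverse, List.mem_map] at hb
      obtain ⟨d, hd, rfl⟩ := hb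
      exact hs _ (hw d hd)
    · rw [← hp, List.prod_inv_reverse]

theorem WLe.exists_bound {G : Type*} [Group G] {X : Set G} (hs : ∀ g ∈ X, g⁻¹ ∈ X)
    (hX : Subgroup.closure X = ⊤) {T : Set G} (hT : T.Finite) : ∃ l, ∀ g ∈ T, WLe X g l := by
  choose f hf using WLe.exists hs hX
  obtain ⟨l, hl⟩ := (hT.image f).bddAbove
  exact ⟨l, fun g hg => (hf g).mono (hl ⟨g, hg, rfl⟩)⟩

/-- Abstract form: bounded number of letters other than `y`, `y⁻¹` in geodesics. -/
theorem exists_good_genset {G Q : Type*} [Group G] [Group.FG G] [Fintype Q] [DecidableEq Q]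
    [DecidableEq G]
    (x : G) (φ : (Q → ℤ) → G) (τ : Q → G) (hadd : ∀ f g, φ (f + g) = φ f * φ g)
    (hsingle : ∀ c n, φ (Pi.single c n) = τ c * x ^ n * (τ c)⁻¹)
    (hdec : ∀ g, ∃ c f, g = φ f * τ c) :
    ∃ (X : Finset G) (y : G), (∀ g ∈ X, g⁻¹ ∈ X) ∧ Subgroup.closure (X : Set G) = ⊤ ∧
      ∃ K : ℕ, ∀ w : List G, IsGeodesicWord (X : Set G) w →
        w.countP (fun a => a ≠ y ∧ a ≠ y⁻¹) ≤ K := by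
  obtain ⟨S, hS⟩ := (Group.fg_def.1 (inferInstance : Group.FG G))
  choose cc hh hdec using hdec
  have hzero : φ 0 = 1 := by
    have := hadd 0 0
    simpa using this
  -- the constant C
  let nrm : (Q → ℤ) → ℕ := fun f => ∑ c, (f c).natAbs
  have nadd : ∀ f g, nrm (f + g) ≤ nrm f + nrm g := by
    intro f g
    simp only [nrm, ← Finset.sum_add_distrib]
    exact Finset.sum_le_sum fun c _ => Int.natAbs_add_le _ _
  have nsingle : ∀ c n, nrm (Pi.single c n) = n.natAbs := by
    intro c n
    simp only [nrm]
    rw [Finset.sum_eq_single c]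
    · simp
    · intro b _ hb; simp [hb]
    · simp
  let S' : Finset G := S ∪ S.image (·⁻¹)
  obtain ⟨C, hC0, hC1, hC⟩ : ∃ C : ℕ, 0 < C ∧ nrm (hh 1) ≤ C ∧
      ∀ c, ∀ s ∈ S', nrm (hh (τ c * s)) ≤ C := by
    let C1 := ((Finset.univ : Finset Q) ×ˢ S').sup (fun p => nrm (hh (τ p.1 * p.2)))
    refine ⟨C1 + nrm (hh 1) + 1, by omega, by omega, ?_⟩
    intro c s hs
    have : nrm (hh (τ c * s)) ≤ C1 :=
      Finset.le_sup (f := fun p : Q × G => nrm (hh (τ p.1 * p.2))) (b := (c, s))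
        (by simp [hs])
    omega
  let N : ℕ := 2 * C
  let y : G := x ^ (N : ℤ)
  let X : Finset G := S' ∪ {y, y⁻¹}
  have hsymm : ∀ g ∈ X, g⁻¹ ∈ X := by
    intro g hg
    simp only [X, S', Finset.mem_union, Finset.mem_image, Finset.mem_insert,
      Finset.mem_singleton] at hg ⊢
    rcases hg with (h | ⟨a, h, rfl⟩) | h | h
    · exact Or.inl (Or.inr ⟨g, h, rfl⟩)
    · exact Or.inl (Or.inl (by simpa using h))
    · subst h; simp
    · subst h; simp
  have hgen : Subgroup.closure (X : Set G) = ⊤ := by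
    rw [eq_top_iff, ← hS]
    apply Subgroup.closure_mono
    intro g hg
    have : g ∈ S := hg
    simp [X, S', this]
  have hyX : y ∈ (X : Set G) := by simp [X]
  have hyX' : y⁻¹ ∈ (X : Set G) := by simp [X]
  -- step 1: normal form
  have step1 : ∀ w : List G, (∀ a ∈ w, a ∈ X) → ∃ (E F : Q → ℤ) (c : Q),
      w.prod = φ ((N : ℤ) • E + F) * τ c ∧
      nrm E + w.countP (fun a => a ≠ y ∧ a ≠ y⁻¹) ≤ w.length ∧
      nrm F ≤ C * w.countP (fun a => a ≠ y ∧ a ≠ y⁻¹) + C := by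
    intro w
    induction w using List.reverseRecOn with
    | nil =>
      intro _
      refine ⟨0, hh 1, cc 1, ?_, ?_, ?_⟩
      · simpa using hdec 1
      · simp [nrm]
      · simpa using hC1
    | append_singleton w a ih =>
      intro hw
      obtain ⟨E, F, c, hprod, hE, hF⟩ := ih (fun b hb => hw b (by simp [hb]))
      have haX : a ∈ X := hw a (by simp)
      have key : ∀ e : ℤ, τ c * y ^ e = φ (Pi.single c ((N : ℤ) * e)) * τ c := by
        intro e
        rw [hsingle]; simp only [y]; rw [← zpow_mul]; group
      by_cases hay : a = y ∨ a = y⁻¹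
      · obtain ⟨e, he, hae⟩ : ∃ e : ℤ, e.natAbs = 1 ∧ a = y ^ e := by
          rcases hay with h | h
          · exact ⟨1, by simp, by simpa using h⟩
          · exact ⟨-1, by simp, by simpa using h⟩
        have hcnt : (w ++ [a]).countP (fun a => a ≠ y ∧ a ≠ y⁻¹)
            = w.countP (fun a => a ≠ y ∧ a ≠ y⁻¹) := by
          rw [List.countP_append]
          have : ¬ (a ≠ y ∧ a ≠ y⁻¹) := by tauto
          simp [List.countP_singleton, this]
        refine ⟨E + Pi.single c e, F, c, ?_, ?_, ?_⟩
        · rw [List.prod_append, hprod, List.prod_singleton, mul_assoc, hae, key, ← mul_assoc,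
            ← hadd]
          congr 2
          have : (Pi.single c ((N : ℤ) * e) : Q → ℤ) = (N : ℤ) • Pi.single c e := by
            ext b
            by_cases hb : b = c
            · subst hb; simp
            · simp [hb]
          rw [this, smul_add]; abel
        · rw [hcnt, List.length_append, List.length_singleton]
          have := nadd E (Pi.single c e)
          rw [nsingle, he] at this
          omega
        · rw [hcnt]; exact hF
      · have haS : a ∈ S' := by
          simp only [X, Finset.mem_union, Finset.mem_insert, Finset.mem_singleton] at haX
          tauto
        have hcnt : (w ++ [a]).countP (fun a => a ≠ y ∧ a ≠ y⁻¹)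
            = w.countP (fun a => a ≠ y ∧ a ≠ y⁻¹) + 1 := by
          rw [List.countP_append]
          have : (a ≠ y ∧ a ≠ y⁻¹) := by tauto
          simp [List.countP_singleton, this]
        refine ⟨E, F + hh (τ c * a), cc (τ c * a), ?_, ?_, ?_⟩
        · rw [List.prod_append, hprod, List.prod_singleton, mul_assoc, hdec (τ c * a),
            ← mul_assoc, ← hadd, ← hdec, add_assoc]
        · rw [hcnt, List.length_append, List.length_singleton]
          omega
        · rw [hcnt]
          have h1 := nadd F (hh (τ c * a))
          have h2 := hC c a haS
          rw [mul_add]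
          omega
  -- step 2
  obtain ⟨D1, hD1⟩ := WLe.exists_bound (X := (X : Set G)) hsymm hgen
    (Set.finite_range (fun c => τ c))
  obtain ⟨D2, hD2⟩ := WLe.exists_bound (X := (X : Set G)) hsymm hgen
    (Set.finite_range (fun c => (τ c)⁻¹))
  have step2 : ∀ E : Q → ℤ, WLe (X : Set G) (φ ((N : ℤ) • E))
      (nrm E + Fintype.card Q * (D1 + D2)) := by
    intro E
    have : ∀ s : Finset Q, WLe (X : Set G) (φ (∑ c ∈ s, Pi.single c ((N : ℤ) * E c)))
        (∑ c ∈ s, (E c).natAbs + s.card * (D1 + D2)) := by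
      intro s
      induction s using Finset.induction_on with
      | empty => exact ⟨[], by simp, by simp [hzero], by simp⟩
      | insert c s hc ih =>
        rw [Finset.sum_insert hc, Finset.sum_insert hc, Finset.card_insert_of_notMem hc, hadd,
          hsingle, zpow_mul]
        refine ((((hD1 _ ⟨c, rfl⟩).mul (WLe.zpow hyX hyX' (E c))).mul
          (hD2 _ ⟨c, rfl⟩)).mul ih).mono ?_
        rw [add_mul]; omega
    have h := this Finset.univ
    have he : (∑ c, Pi.single c ((N : ℤ) * E c) : Q → ℤ) = (N : ℤ) • E := by
      have := Finset.univ_sum_single ((N : ℤ) • E)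
      simpa using this
    rw [he] at h
    simpa [nrm] using h
  have hTfin : (Set.range (fun p : (Q → Finset.Ioo (-(N : ℤ)) N) × Q =>
      φ (fun c => (p.1 c : ℤ)) * τ p.2)).Finite := Set.finite_range _
  obtain ⟨B, hB⟩ := WLe.exists_bound (X := (X : Set G)) hsymm hgen hTfin
  refine ⟨X, y, hsymm, hgen, 2 * (Fintype.card Q * (D1 + D2) + B) + 1, ?_⟩
  intro w hw
  obtain ⟨E, F, c, hprod, hE, hF⟩ := step1 w hw.1
  have hNpos : (0 : ℤ) < N := by simp only [N]; push_cast; omega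
  let q : Q → ℤ := fun c => (F c).tdiv N
  let r : Q → ℤ := fun c => (F c).tmod N
  have hFqr : F = (N : ℤ) • q + r := by
    ext c
    simp only [q, r, Pi.add_apply, Pi.smul_apply, smul_eq_mul]
    exact (Int.mul_tdiv_add_tmod (F c) N).symm
  have hr : ∀ c, r c ∈ Finset.Ioo (-(N : ℤ)) N := by
    intro c
    rw [Finset.mem_Ioo]
    exact ⟨Int.lt_tmod_of_pos _ hNpos, Int.tmod_lt_of_pos _ hNpos⟩
  have hq : 2 * nrm q ≤ w.countP (fun a => a ≠ y ∧ a ≠ y⁻¹) + 1 := by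
    have h1 : N * nrm q ≤ nrm F := by
      simp only [nrm, Finset.mul_sum]
      apply Finset.sum_le_sum
      intro c _
      simp only [q, Int.natAbs_tdiv, Int.natAbs_natCast]
      exact Nat.mul_div_le _ _
    have h2 : C * (2 * nrm q) ≤ C * (w.countP (fun a => a ≠ y ∧ a ≠ y⁻¹) + 1) := by
      calc C * (2 * nrm q) = N * nrm q := by simp only [N]; ring
        _ ≤ _ := h1.trans (hF.trans (by rw [mul_add, mul_one]))
    exact Nat.le_of_mul_le_mul_left h2 hC0
  have hrep : w.prod = φ ((N : ℤ) • (E + q)) * (φ r * τ c) := by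
    rw [hprod, ← mul_assoc, ← hadd]
    congr 2
    rw [smul_add, add_assoc, ← hFqr]
  have hfin := (step2 (E + q)).mul (hB (φ r * τ c) ⟨(fun c => ⟨r c, hr c⟩, c), rfl⟩)
  rw [← hrep] at hfin
  obtain ⟨w', hw', hp', hl'⟩ := hfin
  have h1 := hw.2 w' hw' hp'
  have h2 := nadd E q
  omega

theorem IsGeodesicWord.of_append {G : Type*} [Group G] {X : Set G} {u v : List G}
    (h : IsGeodesicWord X (u ++ v)) : IsGeodesicWord X u ∧ IsGeodesicWord X v := by
  refine ⟨⟨fun a ha => h.1 a (by simp [ha]), fun w hw hp => ?_⟩,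
    ⟨fun a ha => h.1 a (by simp [ha]), fun w hw hp => ?_⟩⟩
  · have := h.2 (w ++ v) (by
      intro a ha
      rcases List.mem_append.1 ha with h' | h'
      · exact hw a h'
      · exact h.1 a (by simp [h'])) (by simp [hp])
    simp at this; exact this
  · have := h.2 (u ++ w) (by
      intro a ha
      rcases List.mem_append.1 ha with h' | h'
      · exact h.1 a (by simp [h'])
      · exact hw a h') (by simp [hp])
    simp at this; exact this

theorem IsGeodesicWord.run {G : Type*} [Group G] {X : Set G} {y : G} (w : List G)
    (h : IsGeodesicWord X w) (hy : ∀ a ∈ w, a = y ∨ a = y⁻¹) :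
    w = List.replicate w.length y ∨ w = List.replicate w.length y⁻¹ := by
  induction w with
  | nil => simp
  | cons b w ih =>
    have hw : IsGeodesicWord X w := (IsGeodesicWord.of_append (u := [b]) (v := w) h).2
    have hb := hy b (by simp)
    have ih := ih hw (fun a ha => hy a (by simp [ha]))
    cases w with
    | nil => simpa using hb
    | cons d w =>
      have hno : b * d ≠ 1 := by
        intro hbd
        have := h.2 w (fun a ha => h.1 a (by simp [ha])) (by
          simp [← mul_assoc, hbd])
        simp at this
      simp only [List.length_cons, List.replicate_succ, List.cons.injEq] at ih ⊢
      rcases ih with ⟨h1, h2⟩ | ⟨h1, h2⟩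
      · left
        refine ⟨?_, h1, h2⟩
        rcases hb with hb | hb
        · exact hb
        · exact absurd (by simp [hb, h1]) hno
      · right
        refine ⟨?_, h1, h2⟩
        rcases hb with hb | hb
        · exact absurd (by simp [hb, h1]) hno
        · exact hb

/-- Runs of `y` or `y⁻¹` of length at most `n`. -/
def runSet {G : Type*} [Group G] [DecidableEq G] (y : G) (n : ℕ) : Finset (List G) :=
  (Finset.range (n + 1)).image (fun i => List.replicate i y) ∪
    (Finset.range (n + 1)).image (fun i => List.replicate i y⁻¹)

/-- Words with at most `j` letters of `X` separating runs. -/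
def wordSet {G : Type*} [Group G] [DecidableEq G] (X : Finset G) (y : G) (n : ℕ) :
    ℕ → Finset (List G)
  | 0 => runSet y n
  | j + 1 => runSet y n ∪
      ((runSet y n) ×ˢ (X ×ˢ wordSet X y n j)).image (fun p => p.1 ++ (p.2.1 :: p.2.2))

theorem card_runSet {G : Type*} [Group G] [DecidableEq G] (y : G) (n : ℕ) :
    (runSet y n).card ≤ 2 * (n + 1) := by
  unfold runSet
  refine (Finset.card_union_le _ _).trans ?_
  have h1 : ((Finset.range (n + 1)).image (fun i => List.replicate i y)).card ≤ _ :=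
    Finset.card_image_le
  have h2 : ((Finset.range (n + 1)).image (fun i => List.replicate i y⁻¹)).card ≤ _ :=
    Finset.card_image_le
  rw [Finset.card_range] at h1 h2
  omega

theorem card_wordSet {G : Type*} [Group G] [DecidableEq G] (X : Finset G) (y : G) (n j : ℕ) :
    (wordSet X y n j).card ≤ (2 * (n + 1) * (1 + X.card)) ^ (j + 1) := by
  induction j with
  | zero =>
    have := card_runSet y n
    simp only [wordSet, zero_add, pow_one]
    nlinarith
  | succ j ih =>
    have h0 := card_runSet y n
    simp only [wordSet]
    refine (Finset.card_union_le _ _).trans ?_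
    refine (Nat.add_le_add_left Finset.card_image_le _).trans ?_
    rw [Finset.card_product, Finset.card_product]
    have h1 : 1 ≤ (2 * (n + 1) * (1 + X.card)) ^ (j + 1) := Nat.one_le_pow _ _ (by positivity)
    set P := (2 * (n + 1) * (1 + X.card)) ^ (j + 1) with hP
    calc (runSet y n).card + (runSet y n).card * (X.card * (wordSet X y n j).card)
        ≤ 2 * (n + 1) * P + 2 * (n + 1) * (X.card * P) := by
          gcongr
          nlinarith
      _ = P * (2 * (n + 1) * (1 + X.card)) := by ring
      _ = _ := by rw [pow_succ _ (j + 1)]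

theorem mem_wordSet {G : Type*} [Group G] [DecidableEq G] (X : Finset G) (y : G) (n j : ℕ)
    (w : List G) (hw : IsGeodesicWord (X : Set G) w) (hn : w.length ≤ n)
    (hj : w.countP (fun a => a ≠ y ∧ a ≠ y⁻¹) ≤ j) : w ∈ wordSet X y n j := by
  have run_mem : ∀ u : List G, IsGeodesicWord (X : Set G) u → u.length ≤ n →
      (∀ a ∈ u, a = y ∨ a = y⁻¹) → u ∈ runSet y n := by
    intro u hu hun hy
    simp only [runSet, Finset.mem_union, Finset.mem_image, Finset.mem_range]
    rcases hu.run u hy with h | h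
    · exact Or.inl ⟨u.length, by omega, h.symm⟩
    · exact Or.inr ⟨u.length, by omega, h.symm⟩
  have split : ∀ w : List G, (∀ a ∈ w, a = y ∨ a = y⁻¹) ∨ ∃ u s v, w = u ++ s :: v ∧
      (∀ a ∈ u, a = y ∨ a = y⁻¹) ∧ (s ≠ y ∧ s ≠ y⁻¹) := by
    intro w
    induction w with
    | nil => simp
    | cons b w ih =>
      by_cases hb : b = y ∨ b = y⁻¹
      · rcases ih with h | ⟨u, s, v, h1, h2, h3⟩
        · left
          intro a ha
          rcases List.mem_cons.1 ha with h' | h'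
          · exact h' ▸ hb
          · exact h a h'
        · right
          refine ⟨b :: u, s, v, by simp [h1], ?_, h3⟩
          intro a ha
          rcases List.mem_cons.1 ha with h' | h'
          · exact h' ▸ hb
          · exact h2 a h'
      · right
        exact ⟨[], b, w, by simp, by simp, by tauto⟩
  induction j generalizing w with
  | zero =>
    simp only [wordSet]
    refine run_mem w hw hn ?_
    rcases split w with h | ⟨u, s, v, h1, h2, h3⟩
    · exact h
    · exfalso
      rw [h1, List.countP_append, List.countP_cons_of_pos (by simpa using h3)] at hj
      omega
  | succ j ih =>
    simp only [wordSet, Finset.mem_union]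
    rcases split w with h | ⟨u, s, v, h1, h2, h3⟩
    · exact Or.inl (run_mem w hw hn h)
    · right
      rw [h1, List.countP_append, List.countP_cons_of_pos (by simpa using h3)] at hj
      rw [h1] at hw hn
      rw [List.length_append, List.length_cons] at hn
      have hv : IsGeodesicWord (X : Set G) v :=
        (IsGeodesicWord.of_append (u := [s]) (v := v) hw.of_append.2).2
      rw [Finset.mem_image]
      refine ⟨(u, s, v), ?_, h1.symm⟩
      simp only [Finset.mem_product]
      exact ⟨run_mem u hw.of_append.1 (by omega) h2, hw.1 s (by simp),
        ih v hv (by omega) (by omega)⟩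

theorem exists_structure {G : Type*} [Group G] (x : G) (A : Subgroup G)
    (hA : A = Subgroup.normalClosure {x})
    (habelian : ∀ u v : G, u ∈ A → v ∈ A → u * v = v * u)
    [Fintype (G ⧸ A)] [DecidableEq (G ⧸ A)] :
    ∃ (φ : ((G ⧸ A) → ℤ) → G) (τ : (G ⧸ A) → G), (∀ f g, φ (f + g) = φ f * φ g) ∧
      (∀ c n, φ (Pi.single c n) = τ c * x ^ n * (τ c)⁻¹) ∧ (∀ g, ∃ c f, g = φ f * τ c) := by
  have hnorm : A.Normal := by rw [hA]; infer_instance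
  have hxA : x ∈ A := by rw [hA]; exact Subgroup.subset_normalClosure rfl
  letI : CommGroup A :=
    { (inferInstance : Group A) with
      mul_comm := fun a b => Subtype.ext (habelian a b a.2 b.2) }
  let τ : (G ⧸ A) → G := fun c => c.out
  let xA : (G ⧸ A) → A := fun c => ⟨τ c * x * (τ c)⁻¹, hnorm.conj_mem x hxA _⟩
  let φ : ((G ⧸ A) → ℤ) → G := fun f => ((∏ c, xA c ^ f c : A) : G)
  have hadd : ∀ f g, φ (f + g) = φ f * φ g := by
    intro f g
    simp only [φ, Pi.add_apply, zpow_add, Finset.prod_mul_distrib]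
    rfl
  have hsingle : ∀ c n, φ (Pi.single c n) = τ c * x ^ n * (τ c)⁻¹ := by
    intro c n
    have : (∏ b, xA b ^ (Pi.single c n : (G ⧸ A) → ℤ) b : A) = xA c ^ n := by
      rw [Finset.prod_eq_single c]
      · simp
      · intro b _ hb; simp [hb]
      · simp
    simp only [φ]
    rw [this]
    calc ((xA c ^ n : A) : G) = (τ c * x * (τ c)⁻¹) ^ n := rfl
      _ = _ := conj_zpow
  have hzero : φ 0 = 1 := by
    have := hadd 0 0
    simpa using this
  have hneg : ∀ f, φ (-f) = (φ f)⁻¹ := by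
    intro f
    rw [eq_inv_iff_mul_eq_one, ← hadd]; simp [hzero]
  have hsurj : ∀ a ∈ A, ∃ f, φ f = a := by
    intro a ha
    rw [hA] at ha
    unfold Subgroup.normalClosure at ha
    induction ha using Subgroup.closure_induction with
    | mem b hb =>
      rw [Group.mem_conjugatesOfSet_iff] at hb
      obtain ⟨z, hz, hzb⟩ := hb
      rw [Set.mem_singleton_iff] at hz
      subst hz
      obtain ⟨g, hg⟩ := isConj_iff.1 hzb
      refine ⟨Pi.single (g : G ⧸ A) 1, ?_⟩
      rw [hsingle, ← hg]
      have h1 : (τ (g : G ⧸ A))⁻¹ * g ∈ A := by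
        rw [← QuotientGroup.eq]; exact Quotient.out_eq _
      have h2 := habelian _ _ h1 hxA
      have h3 : g = τ (g : G ⧸ A) * ((τ (g : G ⧸ A))⁻¹ * g) := by group
      generalize (τ (g : G ⧸ A))⁻¹ * g = a at h2 h3
      rw [zpow_one]
      conv_rhs => rw [h3]
      rw [mul_inv_rev, mul_assoc _ a, h2]
      group
    | one => exact ⟨0, hzero⟩
    | mul a b _ _ iha ihb =>
      obtain ⟨f, rfl⟩ := iha
      obtain ⟨g, rfl⟩ := ihb
      exact ⟨f + g, hadd f g⟩
    | inv a _ iha =>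
      obtain ⟨f, rfl⟩ := iha
      exact ⟨-f, hneg f⟩
  refine ⟨φ, τ, hadd, hsingle, ?_⟩
  intro g
  have h1 : (τ (g : G ⧸ A))⁻¹ * g ∈ A := by
    rw [← QuotientGroup.eq]; exact Quotient.out_eq _
  obtain ⟨f, hf⟩ := hsurj _ (hnorm.mem_comm h1)
  exact ⟨g, f, by rw [hf]; group⟩

/-- Main Theorem: if G contains an element x whose normal closure is abelian and of finite
index, then G has a finite symmetric generating set with polynomial geodesic growth. -/
theorem main_theorem_polynomial_geodesic_growth {G : Type*} [Group G] [Group.FG G]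
    (x : G)
    (habelian : ∀ u v : G, u ∈ Subgroup.normalClosure {x} →
      v ∈ Subgroup.normalClosure {x} → u * v = v * u)
    (hfi : (Subgroup.normalClosure {x} : Subgroup G).FiniteIndex) :
    ∃ X : Finset G, (∀ g ∈ X, g⁻¹ ∈ X) ∧ Subgroup.closure (X : Set G) = ⊤ ∧
      ∃ c d : ℕ, ∀ n : ℕ, 1 ≤ n → geodesicGrowth (X : Set G) n ≤ c * n ^ d := by
  classical
  haveI := hfi
  haveI : Fintype (G ⧸ (Subgroup.normalClosure {x} : Subgroup G)) := Fintype.ofFinite _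
  obtain ⟨φ, τ, h1, h2, h3⟩ := exists_structure x _ rfl habelian
  obtain ⟨X, y, hs, hg, K, hK⟩ := exists_good_genset x φ τ h1 h2 h3
  refine ⟨X, hs, hg, (4 * (1 + X.card)) ^ (K + 1), K + 1, ?_⟩
  intro n hn
  unfold geodesicGrowth
  have hsub : {w : List G | IsGeodesicWord (X : Set G) w ∧ w.length ≤ n} ⊆
      (wordSet X y n K : Set (List G)) := by
    rintro w ⟨hw, hl⟩
    exact mem_wordSet X y n K w hw hl (hK w hw)
  calc _ ≤ (wordSet X y n K : Set (List G)).ncard :=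
        Set.ncard_le_ncard hsub (Finset.finite_toSet _)
    _ = (wordSet X y n K).card := Set.ncard_coe_finset _
    _ ≤ (2 * (n + 1) * (1 + X.card)) ^ (K + 1) := card_wordSet X y n K
    _ ≤ (4 * (1 + X.card) * n) ^ (K + 1) := by
        apply Nat.pow_le_pow_left
        nlinarith [Nat.zero_le X.card, Nat.mul_le_mul_right X.card hn]
    _ = _ := mul_pow _ _ _
end
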